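/- arXiv:2504.06568 — 8 statements merged into one kernel-verified Lean document; each statement's English description precedes it below -/
import Mathlib

section
/- For all x, y ∈ ℝ^n, the proximal inequality holds: F(x) − F(T_L y) − ⟨L(y − T_L y), x − y⟩ − (L/2)‖y − T_L y‖² − (μ/2)‖x − y‖² ≥ 0. -/
/-!
Write `t = T y`. Three inequalities add up to the claim when `g x` is finite:
* the descent lemma `f t ≤ f y + ⟪∇f y, t - y⟫ + L/2 ‖t - y‖²` (`descent_lemma`);
* strong convexity of `f` between `y` and `x`;
* the variational inequality `g t ≤ g x + ⟪∇f y, x - t⟫ + L ⟪t - y, x - t⟫` (`prox_variational`),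
  obtained by comparing `t` with the points `t + a (x - t)` and letting `a → 0⁺`.

If `g x = ⊤`, the left-hand side is `⊤`, since `g t` is finite: `t` minimises a function which is
finite somewhere.
-/

open RealInnerProductSpace

/-- The quadratic upper bound for a function with `L`-Lipschitz gradient. Along the segment from
`y` to `t`, the function minus its quadratic model has nonpositive derivative. -/
lemma descent_lemma {E : Type*} [NormedAddCommGroup E] [InnerProductSpace ℝ E] [CompleteSpace E]
    {L : ℝ} {f : E → ℝ} {f' : E → E} (hgrad : ∀ x, HasGradientAt f (f' x) x)
    (hlip : ∀ x y, ‖f' x - f' y‖ ≤ L * ‖x - y‖) (y t : E) :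
    f t ≤ f y + ⟪f' y, t - y⟫ + L / 2 * ‖t - y‖ ^ 2 := by
  set d := t - y with hd
  let φ : ℝ → ℝ := fun s => f (y + s • d) - s * ⟪f' y, d⟫ - L / 2 * ‖d‖ ^ 2 * s ^ 2
  have hder : ∀ s, HasDerivAt φ (⟪f' (y + s • d), d⟫ - ⟪f' y, d⟫ - L * ‖d‖ ^ 2 * s) s := by
    intro s
    have h1 : HasDerivAt (fun s : ℝ => y + s • d) d s := by
      simpa using ((hasDerivAt_id s).smul_const d).const_add y
    have h2 : HasDerivAt (fun s : ℝ => f (y + s • d)) ⟪f' (y + s • d), d⟫ s := by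
      have h := (hgrad (y + s • d)).hasFDerivAt.comp_hasDerivAt s h1
      rw [InnerProductSpace.toDual_apply_apply] at h
      exact h
    have h3 : HasDerivAt (fun s : ℝ => s * ⟪f' y, d⟫) ⟪f' y, d⟫ s := by
      simpa using (hasDerivAt_id s).mul_const (⟪f' y, d⟫ : ℝ)
    have h4 : HasDerivAt (fun s : ℝ => L / 2 * ‖d‖ ^ 2 * s ^ 2) (L * ‖d‖ ^ 2 * s) s := by
      refine ((hasDerivAt_pow 2 s).const_mul (L / 2 * ‖d‖ ^ 2)).congr_deriv ?_
      norm_num only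
      ring
    exact (h2.sub h3).sub h4
  have hanti : AntitoneOn φ (Set.Ici 0) := by
    refine antitoneOn_of_deriv_nonpos (convex_Ici 0)
      (fun s _ => (hder s).continuousAt.continuousWithinAt)
      (fun s _ => (hder s).differentiableAt.differentiableWithinAt) ?_
    intro s hs
    rw [interior_Ici, Set.mem_Ioi] at hs
    rw [(hder s).deriv, ← inner_sub_left]
    have h1 := real_inner_le_norm (f' (y + s • d) - f' y) d
    have h2 := hlip (y + s • d) y
    rw [add_sub_cancel_left, norm_smul, Real.norm_of_nonneg hs.le] at h2
    have h3 := mul_le_mul_of_nonneg_right h2 (norm_nonneg d)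
    nlinarith
  have h := hanti (Set.mem_Ici.2 le_rfl) (Set.mem_Ici.2 zero_le_one) zero_le_one
  simp only [φ, one_smul, zero_smul, add_zero, hd, add_sub_cancel] at h
  rw [← hd] at h
  linarith

/-- First-order optimality of the proximal step `t`, for the real values `gx`, `gt` of `g` at `x`
and `t`. The hypothesis is minimality of `t` along the segment towards `x`, with `g` bounded by
convexity. -/
lemma prox_variational {E : Type*} [NormedAddCommGroup E] [InnerProductSpace ℝ E]
    {L gx gt : ℝ} {v x y t : E}
    (h : ∀ a : ℝ, 0 < a → a ≤ 1 → gt + (⟪v, t⟫ + L / 2 * ‖t - y‖ ^ 2) ≤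
      ((1 - a) * gt + a * gx) +
        (⟪v, (1 - a) • t + a • x⟫ + L / 2 * ‖(1 - a) • t + a • x - y‖ ^ 2)) :
    gt ≤ gx + ⟪v, x - t⟫ + L * ⟪t - y, x - t⟫ := by
  set D := gx - gt + ⟪v, x - t⟫ + L * ⟪t - y, x - t⟫ with hD
  have key : ∀ a : ℝ, 0 < a → a ≤ 1 → 0 ≤ D + a * (L / 2 * ‖x - t‖ ^ 2) := by
    intro a ha ha1
    have h1 := h a ha ha1
    have e1 : (1 - a) • t + a • x = t + a • (x - t) := by module
    have e2 : t + a • (x - t) - y = (t - y) + a • (x - t) := by module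
    rw [e1, e2, norm_add_sq_real, inner_add_right, inner_smul_right, inner_smul_right,
      norm_smul, mul_pow, Real.norm_eq_abs, sq_abs] at h1
    refine nonneg_of_mul_nonneg_right (a := a) ?_ ha
    rw [hD]
    linarith
  have hlim : Filter.Tendsto (fun a : ℝ => D + a * (L / 2 * ‖x - t‖ ^ 2))
      (nhdsWithin 0 (Set.Ioi 0)) (nhds D) := by
    have hc : Continuous fun a : ℝ => D + a * (L / 2 * ‖x - t‖ ^ 2) := by fun_prop
    simpa using (hc.tendsto 0).mono_left nhdsWithin_le_nhds
  have hD0 : 0 ≤ D := by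
    refine ge_of_tendsto hlim ?_
    filter_upwards [Ioc_mem_nhdsGT (zero_lt_one (α := ℝ))] with a ha
    exact key a ha.1 ha.2
  linarith

/-- proximal inequality.
For all `x, y ∈ ℝⁿ`,
`F(x) − F(T_L y) − ⟨L(y − T_L y), x − y⟩ − (L/2)‖y − T_L y‖² − (μ/2)‖x − y‖² ≥ 0`,
where `F = f + g` with `f` `L`-Lipschitz smooth and `μ ≥ 0` strongly convex, `g` proper
closed convex, and `T_L y` the proximal gradient step
`argmin_x { g(x) + ⟨∇f(y), x⟩ + (L/2)‖x − y‖² }`. -/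
theorem stmt1 {n : ℕ} (L μ : ℝ) (hL : 0 < L) (hμ : 0 ≤ μ)
    (f : EuclideanSpace ℝ (Fin n) → ℝ)
    (f' : EuclideanSpace ℝ (Fin n) → EuclideanSpace ℝ (Fin n))
    (hgrad : ∀ x, HasGradientAt f (f' x) x)
    (hlip : ∀ x y, ‖f' x - f' y‖ ≤ L * ‖x - y‖)
    (hsc : ∀ x y, f y + ⟪f' y, x - y⟫ + μ / 2 * ‖x - y‖ ^ 2 ≤ f x)
    (g : EuclideanSpace ℝ (Fin n) → EReal)
    (hg_bot : ∀ x, g x ≠ ⊥) (hg_proper : ∃ x, g x ≠ ⊤)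
    (hg_lsc : LowerSemicontinuous g)
    (hg_conv : ∀ x y : EuclideanSpace ℝ (Fin n), ∀ a b : ℝ,
      0 ≤ a → 0 ≤ b → a + b = 1 →
      g (a • x + b • y) ≤ (a : EReal) * g x + (b : EReal) * g y)
    (T : EuclideanSpace ℝ (Fin n) → EuclideanSpace ℝ (Fin n))
    (hT : ∀ y x, g (T y) + ((⟪f' y, T y⟫ + L / 2 * ‖T y - y‖ ^ 2 : ℝ) : EReal)
        ≤ g x + ((⟪f' y, x⟫ + L / 2 * ‖x - y‖ ^ 2 : ℝ) : EReal))
    (x y : EuclideanSpace ℝ (Fin n)) :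
    ((f x : EReal) + g x) - ((f (T y) : EReal) + g (T y))
      - ((⟪L • (y - T y), x - y⟫ : ℝ) : EReal)
      - ((L / 2 * ‖y - T y‖ ^ 2 : ℝ) : EReal)
      - ((μ / 2 * ‖x - y‖ ^ 2 : ℝ) : EReal) ≥ (0 : EReal) := by
  have htop : g (T y) ≠ ⊤ := by
    intro h
    obtain ⟨z, hz⟩ := hg_proper
    have h1 := hT y z
    rw [h, EReal.top_add_coe, top_le_iff] at h1
    exact EReal.add_ne_top hz (EReal.coe_ne_top _) h1
  obtain ⟨gt, hgt⟩ : ∃ r : ℝ, g (T y) = r := ⟨_, (EReal.coe_toReal htop (hg_bot _)).symm⟩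
  by_cases hx : g x = ⊤
  · rw [hx, hgt, EReal.coe_add_top, ← EReal.coe_add, EReal.top_sub_coe, EReal.top_sub_coe,
      EReal.top_sub_coe, EReal.top_sub_coe]
    exact le_top
  obtain ⟨gx, hgx⟩ : ∃ r : ℝ, g x = r := ⟨_, (EReal.coe_toReal hx (hg_bot _)).symm⟩
  have hvar : gt ≤ gx + ⟪f' y, x - T y⟫ + L * ⟪T y - y, x - T y⟫ := by
    refine prox_variational fun a ha ha1 => ?_
    have h1 := hT y ((1 - a) • T y + a • x)
    have h2 := hg_conv (T y) x (1 - a) a (by linarith) ha.le (by ring)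
    rw [hgt, hgx] at h2
    rw [hgt] at h1
    exact_mod_cast h1.trans (add_le_add_left h2 _)
  have hdesc := descent_lemma hgrad hlip y (T y)
  have hconv := hsc x y
  rw [hgx, hgt]
  norm_cast
  -- Expand all vectors in terms of `x - y` and `T y - y`.
  have e1 : x - T y = (x - y) - (T y - y) := by abel
  have e2 : y - T y = -(T y - y) := by abel
  rw [e1, inner_sub_right (f' y) (x - y), inner_sub_right (T y - y) (x - y),
    real_inner_self_eq_norm_sq] at hvar
  rw [e2, inner_smul_left, inner_neg_left, norm_neg]
  simp only [conj_trivial]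
  linarith
end

section
/- Stepwise Lyapunov inequality: let 0 ≤ μ < L, α_k ∈ (0, 1), γ_k > 0, R_k ∈ ℝ, and let γ̂_{k+1} := (1 − α_k)γ_k + μα_k, y_k := (γ_k + α_k μ)^{-1}(α_k γ_k v_k + γ̂_{k+1} x_k), g_k := L(y_k − T_L(y_k)), v_{k+1} := γ̂_{k+1}^{-1}(γ_k(1 − α_k)v_k − α_k g_k + μα_k y_k), x_{k+1} := T_L(y_k). Define ε_k := F(x_k) − F(T_L(y_k)) − ⟨g_k, x_k − y_k⟩ − (1/(2L))‖g_k‖² and R_{k+1} := (1/2)(L^{-1} − α_k²/γ̂_{k+1})‖g_k‖² + (1 − α_k)(ε_k + R_k + (μα_k γ_k/(2γ̂_{k+1}))‖v_k − y_k‖²). Then for every x* ∈ ℝ^n: F(x_{k+1}) − F(x*) + R_{k+1} + (γ̂_{k+1}/2)‖v_{k+1} − x*‖² ≤ (1 − α_k)(F(x_k) − F(x*) + R_k + (γ_k/2)‖v_k − x*‖²). -/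
open RealInnerProductSpace

/-!
The engine is the proximal-gradient inequality (`prox_grad_ineq`): for all `z` with `g z` finite,
`F z ≥ F (T y) + ⟪G, z - y⟫ + ‖G‖² / (2L) + μ/2 ‖z - y‖²`, where `G = L (y - T y)`.
It is the sum of the descent lemma for `f` between `y` and `T y`, strong convexity of `f` between
`y` and `z`, and the first-order optimality condition of the proximal subproblem
(`prox_optimality`).

Applied at `z = x*` and multiplied by `α`, it gives the Lyapunov inequality: after inserting the
definition of `R_{k+1}`, what remains is an identity between quadratic forms in `v - y`, `x* - y`
and `G` (`lyapunov_identity`). This identity uses `x_k - y = -(α γ / γ̂) (v - y)`, which is the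
definition of `y`.

When `g` takes the value `⊤` at `x*` the left side is `⊥`, and when it does so only at `x_k` the
right side is `⊤`; otherwise all terms are real.
-/

section Helpers

variable {E : Type*} [NormedAddCommGroup E] [InnerProductSpace ℝ E]

/-- The descent lemma: a function with `L`-Lipschitz gradient lies below its quadratic upper model.
Along the segment, `f` minus the model has nonpositive derivative. -/
lemma descent_ineq [CompleteSpace E] {L : ℝ} {f : E → ℝ} {f' : E → E}
    (hgrad : ∀ x, HasGradientAt f (f' x) x)
    (hlip : ∀ x y, ‖f' x - f' y‖ ≤ L * ‖x - y‖) (y d : E) :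
    f (y + d) ≤ f y + ⟪f' y, d⟫ + L / 2 * ‖d‖ ^ 2 := by
  have hder : ∀ t : ℝ, HasDerivAt
      (fun t : ℝ => f (y + t • d) - t * ⟪f' y, d⟫ - L / 2 * ‖d‖ ^ 2 * t ^ 2)
      (⟪f' (y + t • d), d⟫ - ⟪f' y, d⟫ - L / 2 * ‖d‖ ^ 2 * (2 * t)) t := by
    intro t
    have h1 : HasDerivAt (fun t : ℝ => y + t • d) d t := by
      simpa using ((hasDerivAt_id t).smul_const d).const_add y
    have h2 : HasDerivAt (fun t : ℝ => f (y + t • d)) ⟪f' (y + t • d), d⟫ t := by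
      have h := (hgrad (y + t • d)).hasFDerivAt.comp_hasDerivAt t h1
      simp only [InnerProductSpace.toDual_apply_apply] at h
      exact h
    have h3 : HasDerivAt (fun t : ℝ => t * ⟪f' y, d⟫) ⟪f' y, d⟫ t := by
      simpa using (hasDerivAt_id t).mul_const ⟪f' y, d⟫
    have h4 : HasDerivAt (fun t : ℝ => L / 2 * ‖d‖ ^ 2 * t ^ 2)
        (L / 2 * ‖d‖ ^ 2 * (2 * t)) t := by
      simpa using (hasDerivAt_pow 2 t).const_mul (L / 2 * ‖d‖ ^ 2)
    exact (h2.sub h3).sub h4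
  have hanti := antitoneOn_of_deriv_nonpos (convex_Icc (0 : ℝ) 1)
    (fun t _ => (hder t).continuousAt.continuousWithinAt)
    (fun t _ => (hder t).differentiableAt.differentiableWithinAt)
    (by
      intro t ht
      rw [interior_Icc] at ht
      rw [(hder t).deriv, ← inner_sub_left]
      have h1 := real_inner_le_norm (f' (y + t • d) - f' y) d
      have h2 := hlip (y + t • d) y
      rw [add_sub_cancel_left, norm_smul, Real.norm_of_nonneg ht.1.le] at h2
      have h3 := mul_le_mul_of_nonneg_right h2 (norm_nonneg d)
      nlinarith)
  have h := hanti (Set.left_mem_Icc.2 zero_le_one) (Set.right_mem_Icc.2 zero_le_one) zero_le_one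
  simp only [one_smul, zero_smul, add_zero] at h
  linarith

/-- First-order optimality for the proximal subproblem: `L (y - p) - w` is a subgradient of `g` at
the minimizer `p`, tested at a point `z` where `g` is finite. -/
lemma prox_optimality {L : ℝ} {g : E → EReal}
    (hg_conv : ∀ x y : E, ∀ a b : ℝ, 0 ≤ a → 0 ≤ b → a + b = 1 →
      g (a • x + b • y) ≤ (a : EReal) * g x + (b : EReal) * g y)
    {w y p z : E} {gp gz : ℝ} (hgp : g p = gp) (hgz : g z = gz)
    (hmin : ∀ x, g p + ((⟪w, p⟫ + L / 2 * ‖p - y‖ ^ 2 : ℝ) : EReal)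
        ≤ g x + ((⟪w, x⟫ + L / 2 * ‖x - y‖ ^ 2 : ℝ) : EReal)) :
    gp + ⟪L • (y - p) - w, z - p⟫ ≤ gz := by
  set c : ℝ := gz - gp - ⟪L • (y - p) - w, z - p⟫ with hc
  -- Minimality against `p + t (z - p)`, divided by `t`.
  have key : ∀ t ∈ Set.Ioo (0 : ℝ) 1, 0 ≤ c + t * (L / 2 * ‖z - p‖ ^ 2) := by
    rintro t ⟨ht0, ht1⟩
    have h1 := hg_conv p z (1 - t) t (by linarith) ht0.le (by ring)
    have h2 := (hmin ((1 - t) • p + t • z)).trans (add_le_add_left h1 _)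
    rw [hgp, hgz] at h2
    norm_cast at h2
    have e1 : (1 - t) • p + t • z = p + t • (z - p) := by module
    have e2 : p + t • (z - p) - y = (p - y) + t • (z - p) := by module
    have e3 : y - p = -(p - y) := by abel
    rw [e1, e2, norm_add_sq_real, norm_smul, inner_add_right, inner_smul_right, inner_smul_right,
      Real.norm_of_nonneg ht0.le] at h2
    rw [e3, inner_sub_left, inner_smul_left, inner_neg_left] at hc
    simp only [conj_trivial] at hc
    have h3 : 0 ≤ t * (c + t * (L / 2 * ‖z - p‖ ^ 2)) := by
      rw [hc]; nlinarith
    exact nonneg_of_mul_nonneg_right h3 ht0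
  have hlim : Filter.Tendsto (fun t : ℝ => c + t * (L / 2 * ‖z - p‖ ^ 2))
      (nhdsWithin 0 (Set.Ioi 0)) (nhds c) := by
    have : Continuous fun t : ℝ => c + t * (L / 2 * ‖z - p‖ ^ 2) := by fun_prop
    simpa using (this.tendsto 0).mono_left nhdsWithin_le_nhds
  have hc0 : 0 ≤ c := ge_of_tendsto hlim
    (Filter.eventually_of_mem (Ioo_mem_nhdsGT zero_lt_one) key)
  linarith

/-- The proximal-gradient inequality at a point `z` where `g` is finite. -/
lemma prox_grad_ineq [CompleteSpace E] {L μ : ℝ} (hL : 0 < L) {f : E → ℝ} {f' : E → E}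
    (hgrad : ∀ x, HasGradientAt f (f' x) x)
    (hlip : ∀ x y, ‖f' x - f' y‖ ≤ L * ‖x - y‖)
    (hsc : ∀ x y, f y + ⟪f' y, x - y⟫ + μ / 2 * ‖x - y‖ ^ 2 ≤ f x)
    {g : E → EReal}
    (hg_conv : ∀ x y : E, ∀ a b : ℝ, 0 ≤ a → 0 ≤ b → a + b = 1 →
      g (a • x + b • y) ≤ (a : EReal) * g x + (b : EReal) * g y)
    {y p z G : E} {gp gz : ℝ} (hgp : g p = gp) (hgz : g z = gz)
    (hmin : ∀ x, g p + ((⟪f' y, p⟫ + L / 2 * ‖p - y‖ ^ 2 : ℝ) : EReal)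
        ≤ g x + ((⟪f' y, x⟫ + L / 2 * ‖x - y‖ ^ 2 : ℝ) : EReal))
    (hG : G = L • (y - p)) :
    f p + gp + ⟪G, z - y⟫ + 1 / (2 * L) * ‖G‖ ^ 2 + μ / 2 * ‖z - y‖ ^ 2 ≤ f z + gz := by
  have h1 := descent_ineq hgrad hlip y (p - y)
  have h2 := hsc z y
  have h3 := prox_optimality hg_conv hgp hgz hmin
  rw [add_sub_cancel] at h1
  rw [← hG] at h3
  have e1 : z - p = (z - y) - (p - y) := by abel
  have e2 : p - y = -(L⁻¹ • G) := by
    rw [hG, smul_smul, inv_mul_cancel₀ hL.ne', one_smul]; abel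
  have e3 : L / 2 * ‖p - y‖ ^ 2 = 1 / (2 * L) * ‖G‖ ^ 2 := by
    rw [e2, norm_neg, norm_smul, Real.norm_of_nonneg (inv_nonneg.2 hL.le)]
    field_simp
  have e4 : ⟪G, p - y⟫ = -(2 * (1 / (2 * L) * ‖G‖ ^ 2)) := by
    rw [e2, inner_neg_right, inner_smul_right, real_inner_self_eq_norm_sq]
    field_simp
  rw [e1, inner_sub_left, inner_sub_right G (z - y), inner_sub_right (f' y) (z - y), e4] at h3
  linarith

/-- The quadratic identity behind the Lyapunov inequality: the cross terms with `x* - y` and with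
`v - y` cancel by the choices of `v_{k+1}` and `y_k` respectively. -/
lemma lyapunov_identity {μ α γ γhat : ℝ} (hpos : 0 < γhat)
    (hγhat : γhat = (1 - α) * γ + μ * α) (hsum : γ + α * μ ≠ 0) {v x y G v1 s : E}
    (hy : y = (γ + α * μ)⁻¹ • ((α * γ) • v + γhat • x))
    (hv1 : v1 = γhat⁻¹ • ((γ * (1 - α)) • v - α • G + (μ * α) • y)) :
    γhat / 2 * ‖v1 - s‖ ^ 2 =
      (1 - α) * (γ / 2 * ‖v - s‖ ^ 2) + α * (⟪G, s - y⟫ + μ / 2 * ‖s - y‖ ^ 2)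
        + (1 - α) * ⟪G, x - y⟫ + α ^ 2 / (2 * γhat) * ‖G‖ ^ 2
        - (1 - α) * (μ * α * γ / (2 * γhat) * ‖v - y‖ ^ 2) := by
  have hx : x - y = -((α * γ / γhat) • (v - y)) := by
    have h : (γ + α * μ) • y = (α * γ) • v + γhat • x := by
      rw [hy, smul_smul, mul_inv_cancel₀ hsum, one_smul]
    have h' : γhat • (x - y) = γhat • (-((α * γ / γhat) • (v - y))) := by
      rw [smul_neg, smul_smul, mul_div_cancel₀ _ hpos.ne']
      have hx' : γhat • x = (γ + α * μ) • y - (α * γ) • v := by rw [h]; abel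
      rw [smul_sub, hx', hγhat]
      module
    exact smul_right_injective E hpos.ne' h'
  have hv : v1 - s = γhat⁻¹ • ((γ * (1 - α)) • (v - y) - α • G - γhat • (s - y)) := by
    have hs : s = γhat⁻¹ • (γhat • s) := by
      rw [smul_smul, inv_mul_cancel₀ hpos.ne', one_smul]
    rw [hv1]
    nth_rewrite 1 [hs]
    rw [← smul_sub]
    congr 1
    rw [hγhat]
    module
  have hvs : v - s = (v - y) - (s - y) := by abel
  rw [hv, hx, hvs]
  generalize v - y = a
  generalize s - y = b
  rw [norm_smul, mul_pow, Real.norm_of_nonneg (inv_nonneg.2 hpos.le)]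
  simp only [← real_inner_self_eq_norm_sq, inner_sub_left, inner_sub_right, inner_smul_left,
    inner_smul_right, inner_neg_right, conj_trivial]
  rw [real_inner_comm a G, real_inner_comm a b, real_inner_comm G b]
  have hμα : μ * α = γhat - (1 - α) * γ := by linarith
  have e : α * (μ / 2 * ⟪b, b⟫) = (γhat - (1 - α) * γ) / 2 * ⟪b, b⟫ := by rw [← hμα]; ring
  rw [mul_add, e, hμα]
  field_simp
  ring

end Helpers

/-- stepwise Lyapunov inequality.
Let `0 ≤ μ < L`, `α_k ∈ (0,1)`, `γ_k > 0`, `R_k ∈ ℝ`, and set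
`γ̂_{k+1} := (1 − α_k)γ_k + μα_k`, `y_k := (γ_k + α_k μ)⁻¹(α_k γ_k v_k + γ̂_{k+1} x_k)`,
`g_k := L(y_k − T_L(y_k))`, `v_{k+1} := γ̂_{k+1}⁻¹(γ_k(1 − α_k)v_k − α_k g_k + μα_k y_k)`,
`x_{k+1} := T_L(y_k)`,
`ε_k := F(x_k) − F(T_L(y_k)) − ⟨g_k, x_k − y_k⟩ − (1/(2L))‖g_k‖²` and
`R_{k+1} := (1/2)(L⁻¹ − α_k²/γ̂_{k+1})‖g_k‖²
    + (1 − α_k)(ε_k + R_k + (μα_k γ_k/(2γ̂_{k+1}))‖v_k − y_k‖²)`.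
Then for every `x* ∈ ℝⁿ`:
`F(x_{k+1}) − F(x*) + R_{k+1} + (γ̂_{k+1}/2)‖v_{k+1} − x*‖²
    ≤ (1 − α_k)(F(x_k) − F(x*) + R_k + (γ_k/2)‖v_k − x*‖²)`. -/
theorem stmt4 {n : ℕ} (L μ : ℝ) (hμ : 0 ≤ μ) (hμL : μ < L)
    (f : EuclideanSpace ℝ (Fin n) → ℝ)
    (f' : EuclideanSpace ℝ (Fin n) → EuclideanSpace ℝ (Fin n))
    (hgrad : ∀ x, HasGradientAt f (f' x) x)
    (hlip : ∀ x y, ‖f' x - f' y‖ ≤ L * ‖x - y‖)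
    (hsc : ∀ x y, f y + ⟪f' y, x - y⟫ + μ / 2 * ‖x - y‖ ^ 2 ≤ f x)
    (g : EuclideanSpace ℝ (Fin n) → EReal)
    (hg_bot : ∀ x, g x ≠ ⊥) (hg_proper : ∃ x, g x ≠ ⊤)
    (hg_lsc : LowerSemicontinuous g)
    (hg_conv : ∀ x y : EuclideanSpace ℝ (Fin n), ∀ a b : ℝ,
      0 ≤ a → 0 ≤ b → a + b = 1 →
      g (a • x + b • y) ≤ (a : EReal) * g x + (b : EReal) * g y)
    (T : EuclideanSpace ℝ (Fin n) → EuclideanSpace ℝ (Fin n))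
    (hT : ∀ y x, g (T y) + ((⟪f' y, T y⟫ + L / 2 * ‖T y - y‖ ^ 2 : ℝ) : EReal)
        ≤ g x + ((⟪f' y, x⟫ + L / 2 * ‖x - y‖ ^ 2 : ℝ) : EReal))
    (α γ Rk : ℝ) (hα : α ∈ Set.Ioo (0 : ℝ) 1) (hγ : 0 < γ)
    (vk xk : EuclideanSpace ℝ (Fin n))
    (γhat : ℝ) (hγhat : γhat = (1 - α) * γ + μ * α)
    (yk : EuclideanSpace ℝ (Fin n))
    (hyk : yk = (γ + α * μ)⁻¹ • ((α * γ) • vk + γhat • xk))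
    (gk : EuclideanSpace ℝ (Fin n)) (hgk : gk = L • (yk - T yk))
    (vk1 : EuclideanSpace ℝ (Fin n))
    (hvk1 : vk1 = γhat⁻¹ • ((γ * (1 - α)) • vk - α • gk + (μ * α) • yk))
    (xk1 : EuclideanSpace ℝ (Fin n)) (hxk1 : xk1 = T yk)
    (ε : EReal)
    (hε : ε = ((f xk : EReal) + g xk) - ((f (T yk) : EReal) + g (T yk))
        - ((⟪gk, xk - yk⟫ : ℝ) : EReal) - ((1 / (2 * L) * ‖gk‖ ^ 2 : ℝ) : EReal))
    (Rk1 : EReal)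
    (hRk1 : Rk1 = ((1 / 2 * (L⁻¹ - α ^ 2 / γhat) * ‖gk‖ ^ 2 : ℝ) : EReal)
        + ((1 - α : ℝ) : EReal)
          * (ε + ((Rk + μ * α * γ / (2 * γhat) * ‖vk - yk‖ ^ 2 : ℝ) : EReal))) :
    ∀ xstar : EuclideanSpace ℝ (Fin n),
      ((f xk1 : EReal) + g xk1) - ((f xstar : EReal) + g xstar) + Rk1
          + ((γhat / 2 * ‖vk1 - xstar‖ ^ 2 : ℝ) : EReal)
        ≤ ((1 - α : ℝ) : EReal)
          * (((f xk : EReal) + g xk) - ((f xstar : EReal) + g xstar)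
              + ((Rk + γ / 2 * ‖vk - xstar‖ ^ 2 : ℝ) : EReal)) := by
  intro xstar
  have hL : 0 < L := hμ.trans_lt hμL
  obtain ⟨hα0, hα1⟩ := hα
  have hpos : 0 < γhat := by
    rw [hγhat]
    have := mul_pos (sub_pos.2 hα1) hγ
    have := mul_nonneg hμ hα0.le
    linarith
  have hsum : γ + α * μ ≠ 0 := (add_pos_of_pos_of_nonneg hγ (mul_nonneg hα0.le hμ)).ne'
  have hgT : g (T yk) ≠ ⊤ := by
    obtain ⟨x₀, hx₀⟩ := hg_proper
    intro htop
    have h := hT yk x₀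
    rw [htop, EReal.top_add_coe, top_le_iff] at h
    exact EReal.add_ne_top hx₀ (EReal.coe_ne_top _) h
  obtain ⟨gT, hgT'⟩ : ∃ r : ℝ, g (T yk) = r :=
    ⟨_, (EReal.coe_toReal hgT (hg_bot _)).symm⟩
  by_cases hs : g xstar = ⊤
  · rw [hxk1, hs, hgT', EReal.coe_add_top, ← EReal.coe_add, sub_eq_add_neg, EReal.neg_top,
      EReal.add_bot, EReal.bot_add, EReal.bot_add]
    exact bot_le
  obtain ⟨gs, hgs⟩ : ∃ r : ℝ, g xstar = r := ⟨_, (EReal.coe_toReal hs (hg_bot _)).symm⟩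
  by_cases hk : g xk = ⊤
  · rw [hk, hgs, EReal.coe_add_top, ← EReal.coe_add, EReal.top_sub_coe, EReal.top_add_coe,
      EReal.coe_mul_top_of_pos (sub_pos.2 hα1)]
    exact le_top
  obtain ⟨gx, hgx⟩ : ∃ r : ℝ, g xk = r := ⟨_, (EReal.coe_toReal hk (hg_bot _)).symm⟩
  have hmain := prox_grad_ineq hL hgrad hlip hsc hg_conv hgT' hgs (hT yk) hgk
  have hid := lyapunov_identity (s := xstar) hpos hγhat hsum hyk hvk1
  rw [hRk1, hε, hxk1, hgT', hgs, hgx]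
  norm_cast
  rw [hid]
  have hmul := mul_le_mul_of_nonneg_left hmain hα0.le
  have e1 : 1 / 2 * (L⁻¹ - α ^ 2 / γhat) * ‖gk‖ ^ 2
      = 1 / (2 * L) * ‖gk‖ ^ 2 - α ^ 2 / (2 * γhat) * ‖gk‖ ^ 2 := by
    field_simp
  rw [e1]
  linarith
end

section
/- Abstract similar triangle form: given x_1, v_1 ∈ ℝ^n and sequences (τ_k)_{k≥1}, (ξ_k)_{k≥1}, (δ_k)_{k≥1} with τ_k, ξ_k ∈ (0, 1), suppose the iterates satisfy for all k ≥ 1: y_k = (1 + τ_k)^{-1}(v_k + τ_k x_k), v_{k+1} = (1 + ξ_k)^{-1}(v_k + ξ_k y_k) − (1 + ξ_k)^{-1} δ_k g_k, x_{k+1} = y_k − L^{-1} g_k, where g_k := G_L(y_k). If 1 + ξ_k + τ_k = L δ_k for all k ≥ 1, then for all k ≥ 1: v_{k+1} − x_{k+1} = (1 + ξ_k)^{-1} τ_k (x_{k+1} − x_k). -/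
open RealInnerProductSpace

/-- abstract similar triangle form.
Given `x₁, v₁ ∈ ℝⁿ` and sequences `(τ_k), (ξ_k), (δ_k)` with `τ_k, ξ_k ∈ (0,1)`,
suppose for all `k ≥ 1`:
`y_k = (1 + τ_k)⁻¹(v_k + τ_k x_k)`,
`v_{k+1} = (1 + ξ_k)⁻¹(v_k + ξ_k y_k) − (1 + ξ_k)⁻¹ δ_k g_k`,
`x_{k+1} = y_k − L⁻¹ g_k`, where `g_k := G_L(y_k) = L(y_k − T_L(y_k))`.
If `1 + ξ_k + τ_k = Lδ_k` for all `k ≥ 1`, then for all `k ≥ 1`: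
`v_{k+1} − x_{k+1} = (1 + ξ_k)⁻¹ τ_k (x_{k+1} − x_k)`. -/
theorem stmt7 {n : ℕ} (L μ : ℝ) (hL : 0 < L) (hμ : 0 ≤ μ)
    (f : EuclideanSpace ℝ (Fin n) → ℝ)
    (f' : EuclideanSpace ℝ (Fin n) → EuclideanSpace ℝ (Fin n))
    (hgrad : ∀ x, HasGradientAt f (f' x) x)
    (hlip : ∀ x y, ‖f' x - f' y‖ ≤ L * ‖x - y‖)
    (hsc : ∀ x y, f y + ⟪f' y, x - y⟫ + μ / 2 * ‖x - y‖ ^ 2 ≤ f x)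
    (g : EuclideanSpace ℝ (Fin n) → EReal)
    (hg_bot : ∀ x, g x ≠ ⊥) (hg_proper : ∃ x, g x ≠ ⊤)
    (hg_lsc : LowerSemicontinuous g)
    (hg_conv : ∀ x y : EuclideanSpace ℝ (Fin n), ∀ a b : ℝ,
      0 ≤ a → 0 ≤ b → a + b = 1 →
      g (a • x + b • y) ≤ (a : EReal) * g x + (b : EReal) * g y)
    (T : EuclideanSpace ℝ (Fin n) → EuclideanSpace ℝ (Fin n))
    (hT : ∀ y x, g (T y) + ((⟪f' y, T y⟫ + L / 2 * ‖T y - y‖ ^ 2 : ℝ) : EReal)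
        ≤ g x + ((⟪f' y, x⟫ + L / 2 * ‖x - y‖ ^ 2 : ℝ) : EReal))
    (τ ξ δ : ℕ → ℝ)
    (hτ : ∀ k, 1 ≤ k → τ k ∈ Set.Ioo (0 : ℝ) 1)
    (hξ : ∀ k, 1 ≤ k → ξ k ∈ Set.Ioo (0 : ℝ) 1)
    (x v y : ℕ → EuclideanSpace ℝ (Fin n))
    (hy : ∀ k, 1 ≤ k → y k = (1 + τ k)⁻¹ • (v k + τ k • x k))
    (hv : ∀ k, 1 ≤ k → v (k + 1) = (1 + ξ k)⁻¹ • (v k + ξ k • y k)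
        - ((1 + ξ k)⁻¹ * δ k) • (L • (y k - T (y k))))
    (hx : ∀ k, 1 ≤ k → x (k + 1) = y k - L⁻¹ • (L • (y k - T (y k))))
    (hδ : ∀ k, 1 ≤ k → 1 + ξ k + τ k = L * δ k) :
    ∀ k, 1 ≤ k →
      v (k + 1) - x (k + 1) = ((1 + ξ k)⁻¹ * τ k) • (x (k + 1) - x k) := by
  intro k hk
  have hτ1 : 1 + τ k ≠ 0 := by linarith [(hτ k hk).1]
  have hξ1 : 1 + ξ k ≠ 0 := by linarith [(hξ k hk).1]
  have hvk : v k = (1 + τ k) • y k - τ k • x k := by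
    rw [hy k hk, smul_inv_smul₀ hτ1, add_sub_cancel_right]
  have hxT : x (k + 1) = T (y k) := by
    rw [hx k hk, inv_smul_smul₀ hL.ne', sub_sub_cancel]
  -- With `L δ_k = 1 + ξ_k + τ_k` the `y_k` terms cancel, leaving
  -- `(1 + ξ_k) v_{k+1} = (1 + ξ_k + τ_k) x_{k+1} - τ_k x_k`.
  have hδL : δ k = (1 + ξ k + τ k) / L := by
    rw [hδ k hk, mul_div_cancel_left₀ _ hL.ne']
  rw [hv k hk, hvk, hxT, hδL]
  match_scalars <;> field_simp <;> ring
end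

section
/- R-WAPG intermediate form: if (y_k, v_k, x_k)_{k≥1} is generated by R-WAPG (γ_k := ρ_{k−1}Lα_{k−1}², γ̂_{k+1} := (1 − α_k)γ_k + μα_k = Lα_k², y_k := (γ_k + α_k μ)^{-1}(α_k γ_k v_k + γ̂_{k+1} x_k), g_k := G_L(y_k), v_{k+1} := γ̂_{k+1}^{-1}(γ_k(1 − α_k)v_k − α_k g_k + μα_k y_k), x_{k+1} := T_L(y_k)) with 0 ≤ μ < L and (α_k), (ρ_k) an R-WAPG sequence pair, then for all k ≥ 1 the iterates satisfy: y_k = (1 + (L − Lα_k)/(Lα_k − μ))^{-1}(v_k + ((L − Lα_k)/(Lα_k − μ)) x_k), x_{k+1} = y_k − L^{-1} G_L(y_k), and v_{k+1} = (1 + μ/(Lα_k − μ))^{-1}(v_k + (μ/(Lα_k − μ)) y_k) − (1/(Lα_k)) G_L(y_k). -/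
open RealInnerProductSpace

/-!
Everything follows from two closed forms. For `k ≥ 1` the factor `α_{k-1}²` cancels in
`γ_k = ρ_{k-1} L α_{k-1}²`, which leaves `(1 - α_k) γ_k = α_k (L α_k - μ)`, and therefore
`γ̂_{k+1} = L α_k²`. Writing `a = α_k`, one also gets `γ_k + a μ = a² (L - μ) / (1 - a)`.
With these values both sides of each identity are explicit linear combinations of the same
vectors, and it remains to compare coefficients. The bounds `μ / L < a < 1` make every
denominator (`1 - a`, `L a - μ`, `L - μ`, `L a`) positive.
-/

/-- R-WAPG intermediate form.
If `(y_k, v_k, x_k)` is generated by R-WAPG (`γ_k := ρ_{k−1}Lα_{k−1}²`,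
`γ̂_{k+1} := (1 − α_k)γ_k + μα_k`, `y_k := (γ_k + α_kμ)⁻¹(α_kγ_k v_k + γ̂_{k+1} x_k)`,
`g_k := G_L(y_k) = L(y_k − T_L(y_k))`,
`v_{k+1} := γ̂_{k+1}⁻¹(γ_k(1 − α_k)v_k − α_k g_k + μα_k y_k)`, `x_{k+1} := T_L(y_k)`)
with `0 ≤ μ < L` and `(α_k), (ρ_k)` an R-WAPG sequence pair, then for all `k ≥ 1`:
`y_k = (1 + (L − Lα_k)/(Lα_k − μ))⁻¹(v_k + ((L − Lα_k)/(Lα_k − μ))x_k)`,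
`x_{k+1} = y_k − L⁻¹G_L(y_k)`, and
`v_{k+1} = (1 + μ/(Lα_k − μ))⁻¹(v_k + (μ/(Lα_k − μ))y_k) − (1/(Lα_k))G_L(y_k)`. -/
theorem stmt8 {n : ℕ} (L μ : ℝ) (hμ : 0 ≤ μ) (hμL : μ < L)
    (f : EuclideanSpace ℝ (Fin n) → ℝ)
    (f' : EuclideanSpace ℝ (Fin n) → EuclideanSpace ℝ (Fin n))
    (hgrad : ∀ x, HasGradientAt f (f' x) x)
    (hlip : ∀ x y, ‖f' x - f' y‖ ≤ L * ‖x - y‖)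
    (hsc : ∀ x y, f y + ⟪f' y, x - y⟫ + μ / 2 * ‖x - y‖ ^ 2 ≤ f x)
    (g : EuclideanSpace ℝ (Fin n) → EReal)
    (hg_bot : ∀ x, g x ≠ ⊥) (hg_proper : ∃ x, g x ≠ ⊤)
    (hg_lsc : LowerSemicontinuous g)
    (hg_conv : ∀ x y : EuclideanSpace ℝ (Fin n), ∀ a b : ℝ,
      0 ≤ a → 0 ≤ b → a + b = 1 →
      g (a • x + b • y) ≤ (a : EReal) * g x + (b : EReal) * g y)
    (T : EuclideanSpace ℝ (Fin n) → EuclideanSpace ℝ (Fin n))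
    (hT : ∀ y x, g (T y) + ((⟪f' y, T y⟫ + L / 2 * ‖T y - y‖ ^ 2 : ℝ) : EReal)
        ≤ g x + ((⟪f' y, x⟫ + L / 2 * ‖x - y‖ ^ 2 : ℝ) : EReal))
    (α ρ : ℕ → ℝ)
    (hα0 : α 0 ∈ Set.Ioc (0 : ℝ) 1)
    (hαk : ∀ k, 1 ≤ k → α k ∈ Set.Ioo (μ / L) 1)
    (hρ : ∀ k, ρ k = ((α (k + 1)) ^ 2 - μ / L * α (k + 1)) /
        ((1 - α (k + 1)) * (α k) ^ 2))
    (x v y : ℕ → EuclideanSpace ℝ (Fin n)) (γ γhat : ℕ → ℝ)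
    (hγ : ∀ k, 1 ≤ k → γ k = ρ (k - 1) * L * (α (k - 1)) ^ 2)
    (hγhat : ∀ k, 1 ≤ k → γhat (k + 1) = (1 - α k) * γ k + μ * α k)
    (hy : ∀ k, 1 ≤ k →
      y k = (γ k + α k * μ)⁻¹ • ((α k * γ k) • v k + γhat (k + 1) • x k))
    (hv : ∀ k, 1 ≤ k → v (k + 1) = (γhat (k + 1))⁻¹ •
        ((γ k * (1 - α k)) • v k - α k • (L • (y k - T (y k))) + (μ * α k) • y k))
    (hx : ∀ k, 1 ≤ k → x (k + 1) = T (y k)) :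
    ∀ k, 1 ≤ k →
      y k = (1 + (L - L * α k) / (L * α k - μ))⁻¹ •
          (v k + ((L - L * α k) / (L * α k - μ)) • x k)
        ∧ x (k + 1) = y k - L⁻¹ • (L • (y k - T (y k)))
        ∧ v (k + 1) = (1 + μ / (L * α k - μ))⁻¹ •
            (v k + (μ / (L * α k - μ)) • y k)
          - (1 / (L * α k)) • (L • (y k - T (y k))) := by
  intro k hk
  have hL : 0 < L := lt_of_le_of_lt hμ hμL
  have hprev : 0 < α (k - 1) := by
    rcases Nat.eq_zero_or_pos (k - 1) with h | h
    · rw [h]; exact hα0.1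
    · exact lt_of_le_of_lt (div_nonneg hμ hL.le) (hαk _ h).1
  obtain ⟨ha, ha1⟩ := hαk k hk
  have hρk := hρ (k - 1)
  rw [Nat.sub_add_cancel hk] at hρk
  have hγk := hγ k hk
  have hhat := hγhat k hk
  have hyk := hy k hk
  have hvk := hv k hk
  have ha0 : 0 < α k := lt_of_le_of_lt (div_nonneg hμ hL.le) ha
  have hLa : 0 < L * α k - μ := by
    rw [div_lt_iff₀ hL] at ha
    linarith
  rw [hρk] at hγk
  generalize α k = a at *
  have h1a : (1 - a) ≠ 0 := by linarith
  have hLμ : L - μ ≠ 0 := by linarith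
  have hL0 := hL.ne'
  have ha0' := ha0.ne'
  have hLa' := hLa.ne'
  have haL' : a * L - μ ≠ 0 := by rwa [mul_comm]
  have hp := hprev.ne'
  have hγ' : γ k = a * (L * a - μ) / (1 - a) := by
    rw [hγk]
    field_simp
  have hhat' : γhat (k + 1) = L * a ^ 2 := by
    rw [hhat, hγ']
    field_simp
    ring
  have hsum : γ k + a * μ = a ^ 2 * (L - μ) / (1 - a) := by
    rw [hγ']
    field_simp
    ring
  have e1 : 1 + (L - L * a) / (L * a - μ) = (L - μ) / (L * a - μ) := by
    field_simp
    ring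
  have e2 : 1 + μ / (L * a - μ) = L * a / (L * a - μ) := by
    field_simp
    ring
  refine ⟨?_, ?_, ?_⟩
  · rw [hyk, hsum, hhat', hγ', e1]
    match_scalars <;> field_simp
  · rw [hx k hk, inv_smul_smul₀ hL0, sub_sub_cancel]
  · rw [hvk, hhat', hγ', e2]
    match_scalars <;> field_simp <;> ring
end

section
/- R-WAPG similar triangle form: let 0 ≤ μ < L, let (α_k) be an R-WAPG sequence, and suppose for all k ≥ 1 the iterates satisfy the intermediate form y_k = (1 + (L − Lα_k)/(Lα_k − μ))^{-1}(v_k + ((L − Lα_k)/(Lα_k − μ)) x_k), x_{k+1} = y_k − L^{-1} G_L(y_k), v_{k+1} = (1 + μ/(Lα_k − μ))^{-1}(v_k + (μ/(Lα_k − μ)) y_k) − (1/(Lα_k)) G_L(y_k). Then for all k ≥ 1: v_{k+1} = x_{k+1} + (α_k^{-1} − 1)(x_{k+1} − x_k). -/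
open RealInnerProductSpace

/-! With `d = Lα_k - μ > 0`, the definition of `y_k` can be solved for `v_k`:
`v_k = ((L - μ)/d) y_k - ((L - Lα_k)/d) x_k`. Substituting this into the update of `v`, both
sides of the claim equal `α_k⁻¹ T(y_k) - (α_k⁻¹ - 1) x_k`. -/

/-- R-WAPG similar triangle form.
Let `0 ≤ μ < L`, let `(α_k)` be an R-WAPG sequence, and suppose for all `k ≥ 1` the
iterates satisfy the intermediate form
`y_k = (1 + (L − Lα_k)/(Lα_k − μ))⁻¹(v_k + ((L − Lα_k)/(Lα_k − μ))x_k)`,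
`x_{k+1} = y_k − L⁻¹G_L(y_k)`,
`v_{k+1} = (1 + μ/(Lα_k − μ))⁻¹(v_k + (μ/(Lα_k − μ))y_k) − (1/(Lα_k))G_L(y_k)`.
Then for all `k ≥ 1`: `v_{k+1} = x_{k+1} + (α_k⁻¹ − 1)(x_{k+1} − x_k)`. -/
theorem stmt9 {n : ℕ} (L μ : ℝ) (hμ : 0 ≤ μ) (hμL : μ < L)
    (f : EuclideanSpace ℝ (Fin n) → ℝ)
    (f' : EuclideanSpace ℝ (Fin n) → EuclideanSpace ℝ (Fin n))
    (hgrad : ∀ x, HasGradientAt f (f' x) x)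
    (hlip : ∀ x y, ‖f' x - f' y‖ ≤ L * ‖x - y‖)
    (hsc : ∀ x y, f y + ⟪f' y, x - y⟫ + μ / 2 * ‖x - y‖ ^ 2 ≤ f x)
    (g : EuclideanSpace ℝ (Fin n) → EReal)
    (hg_bot : ∀ x, g x ≠ ⊥) (hg_proper : ∃ x, g x ≠ ⊤)
    (hg_lsc : LowerSemicontinuous g)
    (hg_conv : ∀ x y : EuclideanSpace ℝ (Fin n), ∀ a b : ℝ,
      0 ≤ a → 0 ≤ b → a + b = 1 →
      g (a • x + b • y) ≤ (a : EReal) * g x + (b : EReal) * g y)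
    (T : EuclideanSpace ℝ (Fin n) → EuclideanSpace ℝ (Fin n))
    (hT : ∀ y x, g (T y) + ((⟪f' y, T y⟫ + L / 2 * ‖T y - y‖ ^ 2 : ℝ) : EReal)
        ≤ g x + ((⟪f' y, x⟫ + L / 2 * ‖x - y‖ ^ 2 : ℝ) : EReal))
    (α : ℕ → ℝ)
    (hα0 : α 0 ∈ Set.Ioc (0 : ℝ) 1)
    (hαk : ∀ k, 1 ≤ k → α k ∈ Set.Ioo (μ / L) 1)
    (x v y : ℕ → EuclideanSpace ℝ (Fin n))
    (hy : ∀ k, 1 ≤ k → y k = (1 + (L - L * α k) / (L * α k - μ))⁻¹ •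
        (v k + ((L - L * α k) / (L * α k - μ)) • x k))
    (hx : ∀ k, 1 ≤ k → x (k + 1) = y k - L⁻¹ • (L • (y k - T (y k))))
    (hv : ∀ k, 1 ≤ k → v (k + 1) = (1 + μ / (L * α k - μ))⁻¹ •
        (v k + (μ / (L * α k - μ)) • y k)
      - (1 / (L * α k)) • (L • (y k - T (y k)))) :
    ∀ k, 1 ≤ k →
      v (k + 1) = x (k + 1) + ((α k)⁻¹ - 1) • (x (k + 1) - x k) := by
  intro k hk
  have hL : 0 < L := hμ.trans_lt hμL
  have hα : 0 < α k := (div_nonneg hμ hL.le).trans_lt (hαk k hk).1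
  have hd : 0 < L * α k - μ := by
    have h := (div_lt_iff₀ hL).1 (hαk k hk).1
    linarith
  have hyk := hy k hk
  have hvk := hv k hk
  have hxk : x (k + 1) = T (y k) := by
    rw [hx k hk, inv_smul_smul₀ hL.ne', sub_sub_cancel]
  rw [hvk, hxk]
  generalize T (y k) = t
  have hc1 : 1 + (L - L * α k) / (L * α k - μ) = (L - μ) / (L * α k - μ) := by
    field_simp
    ring
  have hc2 : 1 + μ / (L * α k - μ) = L * α k / (L * α k - μ) := by
    field_simp
    ring
  have hLμ : L - μ ≠ 0 := (sub_pos.2 hμL).ne'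
  have hsolve : v k = ((L - μ) / (L * α k - μ)) • y k
      - ((L - L * α k) / (L * α k - μ)) • x k := by
    rw [hyk, hc1, smul_inv_smul₀ (div_ne_zero hLμ hd.ne'), add_sub_cancel_right]
  rw [hsolve, hc2]
  have hL' := hL.ne'
  have hα' := hα.ne'
  have hd' := hd.ne'
  match_scalars <;> field_simp <;> ring
end

section
/- R-WAPG momentum form: let 0 ≤ μ < L, let (α_k), (ρ_k) be an R-WAPG sequence pair, and suppose for all k ≥ 1 the iterates satisfy the similar triangle form: y_k = (1 + (L − Lα_k)/(Lα_k − μ))^{-1}(v_k + ((L − Lα_k)/(Lα_k − μ)) x_k), x_{k+1} = y_k − L^{-1} G_L(y_k), v_{k+1} = x_{k+1} + (α_k^{-1} − 1)(x_{k+1} − x_k). Then for all k ≥ 1: y_{k+1} = x_{k+1} + ((Lα_{k+1} − μ)(α_k^{-1} − 1)/(L − μ))(x_{k+1} − x_k), and moreover the momentum coefficient satisfies (Lα_{k+1} − μ)(α_k^{-1} − 1)/(L − μ) = ρ_k α_k (1 − α_k)/(ρ_k α_k² + α_{k+1}). -/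
open RealInnerProductSpace

/-!
Write `a = α k` and `b = α (k + 1)`. The weight in the definition of `y (k + 1)` satisfies
`1 + (L - L b) / (L b - μ) = (L - μ) / (L b - μ)`, so substituting `v (k + 1)` gives `x (k + 1)`
plus `(L b - μ) / (L - μ) * (a⁻¹ - 1)` times the step `x (k + 1) - x k`.
For the coefficient, the recurrence reads `ρ a² = b (b - μ / L) / (1 - b)`, hence
`ρ a² + b = b (1 - μ / L) / (1 - b)`, and the common factor `b / (1 - b)` cancels in the quotient.
-/

/-- R-WAPG momentum form.
Let `0 ≤ μ < L`, let `(α_k), (ρ_k)` be an R-WAPG sequence pair, and suppose for all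
`k ≥ 1` the iterates satisfy the similar triangle form
`y_k = (1 + (L − Lα_k)/(Lα_k − μ))⁻¹(v_k + ((L − Lα_k)/(Lα_k − μ))x_k)`,
`x_{k+1} = y_k − L⁻¹G_L(y_k)`, `v_{k+1} = x_{k+1} + (α_k⁻¹ − 1)(x_{k+1} − x_k)`.
Then for all `k ≥ 1`:
`y_{k+1} = x_{k+1} + ((Lα_{k+1} − μ)(α_k⁻¹ − 1)/(L − μ))(x_{k+1} − x_k)`,
and the momentum coefficient satisfies
`(Lα_{k+1} − μ)(α_k⁻¹ − 1)/(L − μ) = ρ_kα_k(1 − α_k)/(ρ_kα_k² + α_{k+1})`. -/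
theorem stmt10 {n : ℕ} (L μ : ℝ) (hμ : 0 ≤ μ) (hμL : μ < L)
    (f : EuclideanSpace ℝ (Fin n) → ℝ)
    (f' : EuclideanSpace ℝ (Fin n) → EuclideanSpace ℝ (Fin n))
    (hgrad : ∀ x, HasGradientAt f (f' x) x)
    (hlip : ∀ x y, ‖f' x - f' y‖ ≤ L * ‖x - y‖)
    (hsc : ∀ x y, f y + ⟪f' y, x - y⟫ + μ / 2 * ‖x - y‖ ^ 2 ≤ f x)
    (g : EuclideanSpace ℝ (Fin n) → EReal)
    (hg_bot : ∀ x, g x ≠ ⊥) (hg_proper : ∃ x, g x ≠ ⊤)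
    (hg_lsc : LowerSemicontinuous g)
    (hg_conv : ∀ x y : EuclideanSpace ℝ (Fin n), ∀ a b : ℝ,
      0 ≤ a → 0 ≤ b → a + b = 1 →
      g (a • x + b • y) ≤ (a : EReal) * g x + (b : EReal) * g y)
    (T : EuclideanSpace ℝ (Fin n) → EuclideanSpace ℝ (Fin n))
    (hT : ∀ y x, g (T y) + ((⟪f' y, T y⟫ + L / 2 * ‖T y - y‖ ^ 2 : ℝ) : EReal)
        ≤ g x + ((⟪f' y, x⟫ + L / 2 * ‖x - y‖ ^ 2 : ℝ) : EReal))
    (α ρ : ℕ → ℝ)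
    (hα0 : α 0 ∈ Set.Ioc (0 : ℝ) 1)
    (hαk : ∀ k, 1 ≤ k → α k ∈ Set.Ioo (μ / L) 1)
    (hρ : ∀ k, ρ k = ((α (k + 1)) ^ 2 - μ / L * α (k + 1)) /
        ((1 - α (k + 1)) * (α k) ^ 2))
    (x v y : ℕ → EuclideanSpace ℝ (Fin n))
    (hy : ∀ k, 1 ≤ k → y k = (1 + (L - L * α k) / (L * α k - μ))⁻¹ •
        (v k + ((L - L * α k) / (L * α k - μ)) • x k))
    (hx : ∀ k, 1 ≤ k → x (k + 1) = y k - L⁻¹ • (L • (y k - T (y k))))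
    (hv : ∀ k, 1 ≤ k →
      v (k + 1) = x (k + 1) + ((α k)⁻¹ - 1) • (x (k + 1) - x k)) :
    ∀ k, 1 ≤ k →
      y (k + 1) = x (k + 1)
          + ((L * α (k + 1) - μ) * ((α k)⁻¹ - 1) / (L - μ)) • (x (k + 1) - x k)
        ∧ (L * α (k + 1) - μ) * ((α k)⁻¹ - 1) / (L - μ)
          = ρ k * α k * (1 - α k) / (ρ k * (α k) ^ 2 + α (k + 1)) := by
  intro k hk
  have hL : 0 < L := hμ.trans_lt hμL
  obtain ⟨ha, -⟩ := hαk k hk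
  obtain ⟨hb, hb1⟩ := hαk (k + 1) (by omega)
  have hq : 0 ≤ μ / L := div_nonneg hμ hL.le
  have ha0 : α k ≠ 0 := (hq.trans_lt ha).ne'
  have hb0 : α (k + 1) ≠ 0 := (hq.trans_lt hb).ne'
  have hLμ : L - μ ≠ 0 := (sub_pos.2 hμL).ne'
  have hbμ : L * α (k + 1) - μ ≠ 0 := by
    rw [div_lt_iff₀ hL] at hb
    linarith
  have h1b : 1 - α (k + 1) ≠ 0 := (sub_pos.2 hb1).ne'
  constructor
  · have hw : 1 + (L - L * α (k + 1)) / (L * α (k + 1) - μ)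
        = (L - μ) / (L * α (k + 1) - μ) := by
      field_simp
      ring
    have hw0 : (L - μ) / (L * α (k + 1) - μ) ≠ 0 := div_ne_zero hLμ hbμ
    rw [hy (k + 1) (by omega), hv k hk, hw, inv_smul_eq_iff₀ hw0, smul_add, smul_smul, ← hw,
      add_smul, one_smul, hw]
    have hc : (L - μ) / (L * α (k + 1) - μ)
        * ((L * α (k + 1) - μ) * ((α k)⁻¹ - 1) / (L - μ)) = (α k)⁻¹ - 1 := by
      field_simp
    rw [hc]
    abel
  · have hnum : ρ k * α k * (1 - α k)
        = α (k + 1) * (L * α (k + 1) - μ) * (1 - α k) / (L * (1 - α (k + 1)) * α k) := by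
      rw [hρ k]
      field_simp
    have hden : ρ k * (α k) ^ 2 + α (k + 1)
        = α (k + 1) * (L - μ) / (L * (1 - α (k + 1))) := by
      rw [hρ k]
      field_simp
      ring
    rw [hnum, hden]
    field_simp
end

section
/- Chambolle–Dossal sequence validity: fix a ≥ 2 and define α_k := a/(k + a) and ρ_k := (k + a)²/((k + 1)(k + a + 1)) for all k ≥ 0. Then (with μ = 0) the pair satisfies the R-WAPG relation α_{k+1}² = (1 − α_{k+1})ρ_k α_k² for all k ≥ 0, and moreover ρ_k ≥ 1 for all k ≥ 0. -/
/-- Chambolle–Dossal sequence validity.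
Fix `a ≥ 2` and define `α_k := a/(k + a)`, `ρ_k := (k + a)²/((k + 1)(k + a + 1))` for
all `k ≥ 0`. Then (with `μ = 0`) the pair satisfies the R-WAPG relation
`α_{k+1}² = (1 − α_{k+1})ρ_k α_k²` for all `k ≥ 0`, and moreover `ρ_k ≥ 1` for all
`k ≥ 0`. -/
theorem stmt16 (a : ℝ) (ha : 2 ≤ a)
    (α ρ : ℕ → ℝ)
    (hα : ∀ k : ℕ, α k = a / (k + a))
    (hρ : ∀ k : ℕ, ρ k = ((k : ℝ) + a) ^ 2 / (((k : ℝ) + 1) * ((k : ℝ) + a + 1))) :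
    (∀ k : ℕ, (α (k + 1)) ^ 2 = (1 - α (k + 1)) * ρ k * (α k) ^ 2) ∧
      (∀ k : ℕ, 1 ≤ ρ k) := by
  refine ⟨fun k => ?_, fun k => ?_⟩
  · have hk : (0 : ℝ) ≤ k := k.cast_nonneg
    have ha0 : 0 < a := by linarith
    have h1 : (k : ℝ) + a ≠ 0 := by positivity
    have h2 : (k : ℝ) + 1 ≠ 0 := by positivity
    have h3 : (k : ℝ) + a + 1 ≠ 0 := by positivity
    have h4 : (k : ℝ) + 1 + a = k + a + 1 := by ring
    rw [hα, hα, hρ]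
    push_cast
    rw [h4]
    field_simp
    ring
  · have hk : (0 : ℝ) ≤ k := k.cast_nonneg
    have ha0 : 0 < a := by linarith
    rw [hρ, one_le_div (by positivity)]
    -- numerator minus denominator is `k * (a - 2) + (a ^ 2 - a - 1)`
    nlinarith [mul_nonneg hk (sub_nonneg.2 ha)]
end

section
/- Constant R-WAPG sequence: let 0 < μ < L, q := μ/L, and fix r ∈ (√q, √(q^{-1})). Then the constant sequences α_k := r√q and ρ_k := ρ := (1 − r^{-1}√q)/(1 − r√q) satisfy: (i) α := r√q ∈ (q, 1) and ρ > 0 and the R-WAPG relation α² − qα = (1 − α)ρα² holds, so they form a valid R-WAPG sequence pair; (ii) the constant momentum θ := ρα(1 − α)/(ρα² + α) equals (1 − r^{-1}√q)(1 − r√q)/(1 − q); (iii) if r = 1 then θ = (1 − √q)/(1 + √q); (iv) ρ > 1 for r ∈ (1, √(q^{-1})) and ρ ≤ 1 for r ∈ (√q, 1]; (v) max(ρ, 1)(1 − α) = 1 − min(μ/(αL), α). -/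
/-! Write `s = √q` and `t = r⁻¹ s`. Then `α t = q`, `α` and `t` both lie in `(0, 1)`, and
`ρ (1 - α) = 1 - t`. In terms of `α` and `t` every claim is elementary: the R-WAPG relation is
`α² - qα = (1 - t) α²`, the denominator of `θ` is `α (1 - q) / (1 - α)`, comparing `ρ` with `1`
is comparing `t` with `α` (that is, `1` with `r`), and since `μ / (α L) = q / α = t`, the last
claim is `max (1 - t) (1 - α) = 1 - min t α`. -/

/-- constant R-WAPG sequence.
Let `0 < μ < L`, `q := μ/L`, and fix `r ∈ (√q, √(q⁻¹))`. Then the constants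
`α := r√q` and `ρ := (1 − r⁻¹√q)/(1 − r√q)` satisfy:
(i) `α ∈ (q, 1)`, `ρ > 0` and `α² − qα = (1 − α)ρα²` (valid R-WAPG pair);
(ii) `θ := ρα(1 − α)/(ρα² + α) = (1 − r⁻¹√q)(1 − r√q)/(1 − q)`;
(iii) if `r = 1` then `θ = (1 − √q)/(1 + √q)`;
(iv) `ρ > 1` for `r ∈ (1, √(q⁻¹))` and `ρ ≤ 1` for `r ∈ (√q, 1]`;
(v) `max(ρ, 1)(1 − α) = 1 − min(μ/(αL), α)`. -/
theorem stmt18 (μ L : ℝ) (hμ : 0 < μ) (hμL : μ < L)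
    (q r α ρ θ : ℝ)
    (hq : q = μ / L)
    (hr : r ∈ Set.Ioo (Real.sqrt q) (Real.sqrt q⁻¹))
    (hα : α = r * Real.sqrt q)
    (hρ : ρ = (1 - r⁻¹ * Real.sqrt q) / (1 - r * Real.sqrt q))
    (hθ : θ = ρ * α * (1 - α) / (ρ * α ^ 2 + α)) :
    (α ∈ Set.Ioo q 1 ∧ 0 < ρ ∧ α ^ 2 - q * α = (1 - α) * ρ * α ^ 2)
      ∧ θ = (1 - r⁻¹ * Real.sqrt q) * (1 - r * Real.sqrt q) / (1 - q)
      ∧ (r = 1 → θ = (1 - Real.sqrt q) / (1 + Real.sqrt q))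
      ∧ (1 < r → 1 < ρ) ∧ (r ≤ 1 → ρ ≤ 1)
      ∧ max ρ 1 * (1 - α) = 1 - min (μ / (α * L)) α := by
  obtain ⟨hr1, hr2⟩ := hr
  have hL : 0 < L := hμ.trans hμL
  have hq0 : 0 < q := by rw [hq]; positivity
  have hq1 : q < 1 := by rw [hq, div_lt_one hL]; exact hμL
  have hμq : μ = q * L := by rw [hq]; field_simp
  rw [Real.sqrt_inv] at hr2
  have hs0 : 0 < √q := Real.sqrt_pos.2 hq0
  have hsq : √q * √q = q := Real.mul_self_sqrt hq0.le
  clear hq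
  generalize √q = s at *
  have hr0 : 0 < r := hs0.trans hr1
  have hα0 : 0 < α := by rw [hα]; positivity
  have hα1 : α < 1 := by
    rw [hα]
    calc r * s < s⁻¹ * s := by gcongr
      _ = 1 := inv_mul_cancel₀ hs0.ne'
  rw [← hα] at hρ ⊢
  obtain ⟨t, ht⟩ : ∃ t, t = r⁻¹ * s := ⟨_, rfl⟩
  rw [← ht] at hρ ⊢
  have hrt : r * t = s := by rw [ht]; field_simp
  have ht0 : 0 < t := by rw [ht]; positivity
  have ht1 : t < 1 := by nlinarith
  have hαt : α * t = q := by rw [hα, ← hsq, ← hrt]; ring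
  have hα' : α = r * r * t := by rw [hα, ← hrt]; ring
  have h1α : 0 < 1 - α := by linarith
  have hρα : ρ * (1 - α) = 1 - t := by rw [hρ]; field_simp
  have hρ0 : 0 < ρ := by rw [hρ]; exact div_pos (by linarith) h1α
  have hθ' : θ = (1 - t) * (1 - α) / (1 - q) := by
    have hden : 0 < ρ * α ^ 2 + α := by positivity
    rw [hθ, div_eq_div_iff hden.ne' (by linarith), ← hαt]
    linear_combination (α * (1 - α * t) - (1 - t) * α ^ 2) * hρα
  refine ⟨⟨⟨?_, hα1⟩, hρ0, ?_⟩, hθ', ?_, ?_, ?_, ?_⟩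
  · rw [← hαt]; nlinarith
  · linear_combination α * hαt - α ^ 2 * hρα
  · intro h
    have hts : t = s := by rw [← hrt, h, one_mul]
    have hαs : α = s := by rw [hα, h, one_mul]
    have hs1 : s < 1 := hαs ▸ hα1
    rw [hθ', hts, hαs, div_eq_div_iff (by linarith) (by linarith), ← hsq]
    ring
  · intro h
    rw [hρ, one_lt_div h1α]
    nlinarith [mul_pos ht0 (mul_pos (sub_pos.2 h) hr0), mul_pos ht0 (sub_pos.2 h)]
  · intro h
    rw [hρ, div_le_one h1α]
    nlinarith [mul_nonneg ht0.le (mul_nonneg (sub_nonneg.2 h) hr0.le),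
      mul_nonneg ht0.le (sub_nonneg.2 h)]
  · have hmin : μ / (α * L) = t := by rw [hμq, ← hαt]; field_simp
    rw [hmin, max_mul_of_nonneg _ _ h1α.le, hρα, one_mul]
    exact max_sub_sub_left 1 t α
end
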